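/- arXiv:2005.00243 — 2 statements merged into one kernel-verified Lean document; each statement's English description precedes it below -/
import Mathlib

section
/- Let (X,d) be a complete separable metric space and let ν be a Borel probability measure on C([0,1],X) concentrated on the set Geo(X) of constant speed geodesics, such that ∫ d(γ_0,γ_1) ν(dγ) < ∞, (e_0)_♯ν ∈ P_1(X), and the coupling (e_0,e_1)_♯ν is concentrated on a d-cyclically monotone set. Then, setting μ_t := (e_t)_♯ν, one has W_1(μ_0,μ_1) = ∫ d(γ_0,γ_1) ν(dγ), and (μ_t)_{t∈[0,1]} is a W_1-geodesic, i.e. W_1(μ_s,μ_t) = |t−s|·W_1(μ_0,μ_1) for all s,t ∈ [0,1]. -/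
/-!
A cyclically monotone set `Λ` admits a Kantorovich potential (`exists_potential`): a `1`-Lipschitz
`u` with `u x - u y = d(x, y)` on `Λ`, obtained as the infimum of the costs of chains in `Λ` ending
at a fixed pair; cyclic monotonicity is what keeps this infimum finite.

For `ν`-almost every `γ`, the function `u` drops by the full length from `γ 0` to `γ 1`, hence it is
affine along `γ` (`IsCSG.potential_eq`): `u (γ t) = u (γ 0) - t d(γ 0, γ 1)`. Integrating, the
difference of `∫ u dμ_s` and `∫ u dμ_t` is `|s - t| ∫ d(γ 0, γ 1) dν` in absolute value. By weak
duality (`enorm_integral_sub_le_Wp`) this bounds `W₁(μ_s, μ_t)` from below, while the coupling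
`(e_s, e_t)_♯ν` gives the same number as an upper bound (`Wp_map_eval_le`). So
`W₁(μ_s, μ_t) = |s - t| ∫ d(γ 0, γ 1) dν` for all `s, t` (`Wp_map_eval_eq`), and both claims
follow, the first being the case `s = 0`, `t = 1`.
-/

open MeasureTheory Set ENNReal

noncomputable section

namespace CDNote

section Sets
variable {X : Type*} [MetricSpace X]

/-- A constant speed geodesic, as a continuous map from `[0,1]`. -/
def IsCSG (γ : C(unitInterval, X)) : Prop :=
  ∀ s t : unitInterval, dist (γ s) (γ t) = |(s : ℝ) - (t : ℝ)| * dist (γ 0) (γ 1)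

/-- The set `Γ_u` associated to a `1`-Lipschitz function `u`. -/
def Gamma (u : X → ℝ) : Set (X × X) := {p | u p.1 - u p.2 = dist p.1 p.2}

/-- The set `Γ_u⁻¹`. -/
def GammaInv (u : X → ℝ) : Set (X × X) := {p | (p.2, p.1) ∈ Gamma u}

/-- The transport relation `R_u = Γ_u ∪ Γ_u⁻¹`. -/
def Ru (u : X → ℝ) : Set (X × X) := Gamma u ∪ GammaInv u

/-- The transport set `T_u = P₁(R_u \ {x = y})`. -/
def Tu (u : X → ℝ) : Set X := {x | ∃ y, (x, y) ∈ Ru u ∧ y ≠ x}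

/-- The set of forward branching points `A_{+,u}`. -/
def Aplus (u : X → ℝ) : Set X :=
  {x | x ∈ Tu u ∧ ∃ z w, (x, z) ∈ Gamma u ∧ (x, w) ∈ Gamma u ∧ (z, w) ∉ Ru u}

/-- The set of backward branching points `A_{-,u}`. -/
def Aminus (u : X → ℝ) : Set X :=
  {x | x ∈ Tu u ∧ ∃ z w, (z, x) ∈ Gamma u ∧ (w, x) ∈ Gamma u ∧ (z, w) ∉ Ru u}

/-- The non-branched transport set `T_u^b = T_u \ (A_{+,u} ∪ A_{-,u})`. -/
def Tub (u : X → ℝ) : Set X := Tu u \ (Aplus u ∪ Aminus u)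

/-- The non-branched transport relation `R_u^b = R_u ∩ (T_u^b × T_u^b)`. -/
def Rub (u : X → ℝ) : Set (X × X) := Ru u ∩ (Tub u) ×ˢ (Tub u)

/-- A closed non-null ray for `u`: the image of a curve parametrized by arclength on a closed
nondegenerate interval, along which `u` is affine with slope `-1`. -/
def IsRay (u : X → ℝ) (S : Set X) : Prop :=
  ∃ (I : Set ℝ) (γ : ℝ → X),
    IsClosed I ∧ I.OrdConnected ∧ (∃ a ∈ I, ∃ b ∈ I, a < b) ∧
    S = γ '' I ∧
    (∀ s ∈ I, ∀ t ∈ I, dist (γ s) (γ t) = |s - t|) ∧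
    (∀ s ∈ I, ∀ t ∈ I, u (γ s) - u (γ t) = t - s)

/-- A transport ray of `Γ_u`: a ray that is maximal with respect to inclusion. -/
def IsTransportRay (u : X → ℝ) (S : Set X) : Prop :=
  IsRay u S ∧ ∀ S' : Set X, IsRay u S' → S ⊆ S' → S' = S

end Sets

section MMS
variable {X : Type*} [MetricSpace X] [MeasurableSpace X]

/-- `π` is a coupling of `μ` and `ν`. -/
def IsCoupling (π : Measure (X × X)) (μ ν : Measure X) : Prop :=
  π.map Prod.fst = μ ∧ π.map Prod.snd = ν

/-- The infimal `p`-th power transport cost between two measures. -/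
def Wcost (p : ℝ) (μ ν : Measure X) : ℝ≥0∞ :=
  ⨅ (π : Measure (X × X)) (_ : IsCoupling π μ ν), ∫⁻ z, edist z.1 z.2 ^ p ∂π

/-- The `p`-Wasserstein distance, with values in `[0,∞]`. -/
def Wp (p : ℝ) (μ ν : Measure X) : ℝ≥0∞ := Wcost p μ ν ^ (1 / p)

/-- `μ` has finite `p`-th moment. -/
def FiniteMoment (p : ℝ) (μ : Measure X) : Prop :=
  ∃ x₀ : X, ∫⁻ x, edist x x₀ ^ p ∂μ ≠ ∞

end MMS

/-- The distortion coefficient `σ_{K,N}^{(t)}(θ)`, valued in `[0,∞]`. -/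
def sigmaCoef (K N t θ : ℝ) : ℝ≥0∞ :=
  if N * Real.pi ^ 2 ≤ K * θ ^ 2 then ∞
  else if 0 < K * θ ^ 2 then
    ENNReal.ofReal (Real.sin (t * θ * Real.sqrt (K / N)) / Real.sin (θ * Real.sqrt (K / N)))
  else if K * θ ^ 2 = 0 then ENNReal.ofReal t
  else ENNReal.ofReal (Real.sinh (t * θ * Real.sqrt (-K / N)) / Real.sinh (θ * Real.sqrt (-K / N)))

/-- The distortion coefficient `τ_{K,N}^{(t)}(θ) = t^{1/N} · σ_{K,N-1}^{(t)}(θ)^{1-1/N}` (`N > 1`). -/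
def tauCoef (K N t θ : ℝ) : ℝ≥0∞ :=
  ENNReal.ofReal (t ^ (1 / N)) * sigmaCoef K (N - 1) t θ ^ (1 - 1 / N)

section Dyn
variable {X : Type*} [MetricSpace X] [MeasurableSpace X] [MeasurableSpace C(unitInterval, X)]

/-- Evaluation map `e_t`. -/
def eval (t : unitInterval) : C(unitInterval, X) → X := fun γ => γ t

/-- A set of non-branching geodesics. -/
def IsNonBranchingSet (A : Set C(unitInterval, X)) : Prop :=
  ∀ γ₁ ∈ A, ∀ γ₂ ∈ A,
    (∃ tb : ℝ, 0 < tb ∧ tb < 1 ∧ ∀ s : unitInterval, (s : ℝ) ≤ tb → γ₁ s = γ₂ s) → γ₁ = γ₂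

/-- `(X,d,m)` is essentially non-branching: every optimal dynamical plan between absolutely
continuous marginals in `P₂` is concentrated on a set of non-branching geodesics. -/
def EssentiallyNonBranching (m : Measure X) : Prop :=
  ∀ μ0 μ1 : Measure X,
    IsProbabilityMeasure μ0 → IsProbabilityMeasure μ1 → μ0 ≪ m → μ1 ≪ m →
    FiniteMoment 2 μ0 → FiniteMoment 2 μ1 →
    ∀ ν : Measure C(unitInterval, X), IsProbabilityMeasure ν →
      ν {γ | ¬ IsCSG γ} = 0 →
      ν.map (eval 0) = μ0 → ν.map (eval 1) = μ1 →
      (∀ s t : unitInterval,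
        Wp 2 (ν.map (eval s)) (ν.map (eval t))
          = ENNReal.ofReal |(s : ℝ) - (t : ℝ)| * Wp 2 μ0 μ1) →
      (∫⁻ γ, edist (γ 0) (γ 1) ^ (2 : ℝ) ∂ν) = Wcost 2 μ0 μ1 →
      ∃ A : Set C(unitInterval, X), IsNonBranchingSet A ∧ ν Aᶜ = 0

/-- The condition `CD₁(K,N)`: displacement convexity of the Rényi entropies along dynamical
plans concentrated on constant speed geodesics realizing the `W₁`-distance. -/
def CDone (K N : ℝ) (m : Measure X) : Prop :=
  ∀ μ0 μ1 : Measure X,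
    IsProbabilityMeasure μ0 → IsProbabilityMeasure μ1 → μ0 ≪ m → μ1 ≪ m →
    FiniteMoment 1 μ0 → FiniteMoment 1 μ1 →
    ∃ π : Measure C(unitInterval, X), IsProbabilityMeasure π ∧
      π {γ | ¬ IsCSG γ} = 0 ∧
      (∫⁻ γ, edist (γ 0) (γ 1) ∂π) = Wp 1 μ0 μ1 ∧
      π.map (eval 0) = μ0 ∧ π.map (eval 1) = μ1 ∧
      (∀ t : unitInterval, π.map (eval t) ≪ m) ∧
      (∀ t : unitInterval, ∀ N', N ≤ N' →
        ∫⁻ γ, (tauCoef K N' (1 - (t : ℝ)) (dist (γ 0) (γ 1)) * (μ0.rnDeriv m (γ 0)) ^ (-(1 / N'))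
            + tauCoef K N' (t : ℝ) (dist (γ 0) (γ 1)) * (μ1.rnDeriv m (γ 1)) ^ (-(1 / N'))) ∂π
          ≤ ∫⁻ x, ((π.map (eval t)).rnDeriv m x) ^ (1 - 1 / N') ∂m)

end Dyn

/-- A `d`-cyclically monotone subset of `X × X`. -/
def CyclicallyMonotone {X : Type*} [MetricSpace X] (Λ : Set (X × X)) : Prop :=
  ∀ (n : ℕ) (p : Fin (n + 1) → X × X), (∀ i, p i ∈ Λ) →
    ∑ i, dist (p i).1 (p i).2 ≤ ∑ i, dist (p i).1 (p (i + 1)).2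

/-! ### The Kantorovich potential of a cyclically monotone set -/

section Potential
variable {X : Type*} [MetricSpace X]

/-- The total cost of the chain that starts at `x` and runs through the pairs
`p 0, …, p n`: with `p i = (x_i, y_i)`, it is
`d(x, y_0) + ∑_{i < n} d(x_i, y_{i+1}) - ∑_{i ≤ n} d(x_i, y_i)`. -/
def chainCost (x : X) (n : ℕ) (p : Fin (n + 1) → X × X) : ℝ :=
  dist x (p 0).2 + ∑ i : Fin n, dist (p i.castSucc).1 (p i.succ).2
    - ∑ i, dist (p i).1 (p i).2

/-- The costs of all chains in `Λ` that start at `x` and have `q` as their last pair. -/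
def chainCosts (Λ : Set (X × X)) (q : X × X) (x : X) : Set ℝ :=
  {r | ∃ (n : ℕ) (p : Fin (n + 1) → X × X),
    (∀ i, p i ∈ Λ) ∧ p (Fin.last n) = q ∧ chainCost x n p = r}

/-- A chain that starts at the first component of its last pair is a cycle, so its cost is
nonnegative; moving the starting point to `x` loses at most `d(x, q.1)`. -/
lemma neg_dist_le_of_mem_chainCosts {Λ : Set (X × X)} (hΛ : CyclicallyMonotone Λ) {q : X × X}
    {x : X} {r : ℝ} (hr : r ∈ chainCosts Λ q x) : -dist x q.1 ≤ r := by
  obtain ⟨n, p, hp, hq, rfl⟩ := hr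
  have h := hΛ n p hp
  rw [Fin.sum_univ_castSucc (fun i => dist (p i).1 (p (i + 1)).2)] at h
  simp only [Fin.coeSucc_eq_succ, Fin.last_add_one, hq] at h
  have h2 := dist_triangle q.1 x (p 0).2
  rw [dist_comm q.1 x] at h2
  unfold chainCost
  linarith

/-- Rockafellar's construction: every nonempty cyclically monotone set is contained in `Γ_u` for
some `1`-Lipschitz `u`, namely the infimum of the chain costs. -/
lemma exists_potential {Λ : Set (X × X)} (hΛ : CyclicallyMonotone Λ) (hne : Λ.Nonempty) :
    ∃ u : X → ℝ, LipschitzWith 1 u ∧ Λ ⊆ Gamma u := by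
  obtain ⟨q, hq⟩ := hne
  have hbdd : ∀ x, BddBelow (chainCosts Λ q x) := fun x =>
    ⟨-dist x q.1, fun r hr => neg_dist_le_of_mem_chainCosts hΛ hr⟩
  have hnon : ∀ x, (chainCosts Λ q x).Nonempty := fun x =>
    ⟨_, 0, fun _ => q, fun _ => hq, rfl, rfl⟩
  have hlip : LipschitzWith 1 (fun x => sInf (chainCosts Λ q x)) := by
    refine LipschitzWith.of_le_add fun x y => ?_
    rw [← sub_le_iff_le_add]
    refine le_csInf (hnon y) ?_
    rintro r ⟨n, p, hp, hl, rfl⟩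
    have h1 : sInf (chainCosts Λ q x) ≤ chainCost x n p :=
      csInf_le (hbdd x) ⟨n, p, hp, hl, rfl⟩
    have h2 := dist_triangle x y (p 0).2
    unfold chainCost at *
    linarith
  refine ⟨_, hlip, ?_⟩
  rintro ⟨x, y⟩ hxy
  refine le_antisymm ?_ ?_
  · have := hlip.dist_le_mul x y
    rw [Real.dist_eq, NNReal.coe_one, one_mul] at this
    exact (le_abs_self _).trans this
  · -- Prepending `(x, y)` to a chain from `x` gives a chain from `y` cheaper by `d(x, y)`.
    change dist x y ≤ sInf (chainCosts Λ q x) - sInf (chainCosts Λ q y)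
    rw [le_sub_iff_add_le]
    refine le_csInf (hnon x) ?_
    rintro r ⟨n, p, hp, hl, rfl⟩
    have h1 : sInf (chainCosts Λ q y) ≤ chainCost y (n + 1) (Fin.cons (x, y) p) := by
      refine csInf_le (hbdd y) ⟨n + 1, _, ?_, ?_, rfl⟩
      · intro i
        refine Fin.cases ?_ (fun j => ?_) i
        · simpa using hxy
        · simpa using hp j
      · rw [← Fin.succ_last, Fin.cons_succ, hl]
    have h2 : chainCost y (n + 1) (Fin.cons (x, y) p) = chainCost x n p - dist x y := by
      unfold chainCost
      rw [Fin.sum_univ_succ, Fin.sum_univ_succ (n := n + 1)]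
      simp only [Fin.cons_zero, Fin.cons_succ, Fin.castSucc_zero, ← Fin.succ_castSucc,
        dist_self]
      ring
    linarith

/-- A `1`-Lipschitz function which drops by the full length between the endpoints of a constant
speed geodesic is affine along it. -/
lemma IsCSG.potential_eq {γ : C(unitInterval, X)} (hγ : IsCSG γ) {u : X → ℝ}
    (hu : LipschitzWith 1 u) (h01 : (γ 0, γ 1) ∈ Gamma u) (t : unitInterval) :
    u (γ t) = u (γ 0) - t * dist (γ 0) (γ 1) := by
  have h1 := hu.dist_le_mul (γ 0) (γ t)
  have h2 := hu.dist_le_mul (γ t) (γ 1)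
  have h3 : u (γ 0) - u (γ 1) = dist (γ 0) (γ 1) := h01
  rw [hγ, Real.dist_eq, NNReal.coe_one, one_mul] at h1 h2
  have e1 : |((0 : unitInterval) : ℝ) - t| = t := by
    rw [Set.Icc.coe_zero, zero_sub, abs_neg, abs_of_nonneg t.2.1]
  have e2 : |(t : ℝ) - ((1 : unitInterval) : ℝ)| = 1 - t := by
    rw [Set.Icc.coe_one, abs_sub_comm, abs_of_nonneg (sub_nonneg.2 t.2.2)]
  rw [e1] at h1
  rw [e2] at h2
  have h4 := (le_abs_self _).trans h1
  have h5 := (le_abs_self _).trans h2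
  linarith

end Potential

/-! ### Bounds on the transport cost -/

section Cost
variable {X : Type*} [MetricSpace X] [MeasurableSpace X]

lemma Wp_one_eq (μ μ' : Measure X) :
    Wp 1 μ μ' = ⨅ (π : Measure (X × X)) (_ : IsCoupling π μ μ'), ∫⁻ z, edist z.1 z.2 ∂π := by
  simp [Wp, Wcost]

/-- The easy half of Kantorovich duality. -/
lemma enorm_integral_sub_le_Wp [BorelSpace X] {μ μ' : Measure X} {u : X → ℝ}
    (hu : LipschitzWith 1 u) (hi : Integrable u μ) (hi' : Integrable u μ') :
    ‖∫ x, u x ∂μ - ∫ x, u x ∂μ'‖ₑ ≤ Wp 1 μ μ' := by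
  rw [Wp_one_eq]
  refine le_iInf₂ ?_
  rintro π ⟨rfl, rfl⟩
  have hm : Measurable u := hu.continuous.measurable
  have h1 : Integrable (fun z : X × X => u z.1) π := hi.comp_measurable measurable_fst
  have h2 : Integrable (fun z : X × X => u z.2) π := hi'.comp_measurable measurable_snd
  rw [integral_map measurable_fst.aemeasurable hm.aestronglyMeasurable,
    integral_map measurable_snd.aemeasurable hm.aestronglyMeasurable, ← integral_sub h1 h2]
  refine (enorm_integral_le_lintegral_enorm _).trans (lintegral_mono fun z => ?_)
  rw [← edist_eq_enorm_sub]
  simpa using hu z.1 z.2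

lemma measurable_eval [BorelSpace X] [MeasurableSpace C(unitInterval, X)]
    [BorelSpace C(unitInterval, X)] (t : unitInterval) :
    Measurable (eval t : C(unitInterval, X) → X) :=
  (continuous_eval_const t).measurable

end Cost

section Plan
variable {X : Type*} [MetricSpace X] [SecondCountableTopology X]
  [MeasurableSpace X] [BorelSpace X]
  [MeasurableSpace C(unitInterval, X)] [BorelSpace C(unitInterval, X)]

/-- The coupling `(e_s, e_t)_♯ν` bounds the transport cost from above. -/
lemma Wp_map_eval_le (ν : Measure C(unitInterval, X)) (s t : unitInterval) :
    Wp 1 (ν.map (eval s)) (ν.map (eval t)) ≤ ∫⁻ γ, edist (γ s) (γ t) ∂ν := by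
  have hm : Measurable (fun γ : C(unitInterval, X) => (eval s γ, eval t γ)) :=
    (measurable_eval s).prodMk (measurable_eval t)
  rw [Wp_one_eq]
  have hc : IsCoupling (ν.map fun γ => (eval s γ, eval t γ)) (ν.map (eval s))
      (ν.map (eval t)) := by
    constructor
    · rw [Measure.map_map measurable_fst hm]; rfl
    · rw [Measure.map_map measurable_snd hm]; rfl
  refine iInf_le_of_le _ (iInf_le_of_le hc (le_of_eq ?_))
  rw [lintegral_map (measurable_fst.edist measurable_snd) hm]; rfl

/-- The transport cost between any two intermediate marginals, from which both claims follow. -/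
lemma Wp_map_eval_eq (ν : Measure C(unitInterval, X)) [IsProbabilityMeasure ν]
    (hgeo : ∀ᵐ γ ∂ν, IsCSG γ)
    (hfin : (∫⁻ γ, edist (γ 0) (γ 1) ∂ν) ≠ ∞)
    (hmom : FiniteMoment 1 (ν.map (eval 0)))
    {u : X → ℝ} (hu : LipschitzWith 1 u) (h01 : ∀ᵐ γ ∂ν, (γ 0, γ 1) ∈ Gamma u)
    (s t : unitInterval) :
    Wp 1 (ν.map (eval s)) (ν.map (eval t))
      = ENNReal.ofReal |(s : ℝ) - (t : ℝ)| * ∫⁻ γ, edist (γ 0) (γ 1) ∂ν := by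
  have hev (r : unitInterval) : Measurable (fun γ : C(unitInterval, X) => γ r) :=
    measurable_eval r
  have hmu : Measurable u := hu.continuous.measurable
  have hd : Integrable (fun γ : C(unitInterval, X) => dist (γ 0) (γ 1)) ν := by
    refine ⟨((hev 0).dist (hev 1)).aestronglyMeasurable, ?_⟩
    rw [hasFiniteIntegral_iff_ofReal (ae_of_all _ fun _ => dist_nonneg)]
    simpa only [edist_dist] using hfin.lt_top
  have hu0 : Integrable (fun γ : C(unitInterval, X) => u (γ 0)) ν := by
    obtain ⟨x₀, hx₀⟩ := hmom
    rw [lintegral_map (by fun_prop) (measurable_eval 0)] at hx₀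
    have hd0 : Integrable (fun γ : C(unitInterval, X) => dist (γ 0) x₀) ν := by
      refine ⟨((hev 0).dist measurable_const).aestronglyMeasurable, ?_⟩
      rw [hasFiniteIntegral_iff_ofReal (ae_of_all _ fun _ => dist_nonneg)]
      simpa only [edist_dist, ENNReal.rpow_one, eval] using hx₀.lt_top
    refine (hd0.add (integrable_const |u x₀|)).mono'
      (hmu.comp (hev 0)).aestronglyMeasurable (ae_of_all _ fun γ => ?_)
    have h := hu.dist_le_mul (γ 0) x₀
    rw [Real.dist_eq, NNReal.coe_one, one_mul] at h
    have h' := abs_sub_abs_le_abs_sub (u (γ 0)) (u x₀)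
    simp only [Real.norm_eq_abs, Pi.add_apply]
    linarith
  have haff : ∀ r : unitInterval,
      (fun γ : C(unitInterval, X) => u (γ r)) =ᵐ[ν]
        fun γ => u (γ 0) - r * dist (γ 0) (γ 1) := by
    intro r
    filter_upwards [hgeo, h01] with γ h h' using h.potential_eq hu h' r
  have hint (r : unitInterval) : Integrable u (ν.map (eval r)) := by
    rw [integrable_map_measure hmu.aestronglyMeasurable (measurable_eval r).aemeasurable]
    exact (integrable_congr (haff r)).2 (hu0.sub (hd.const_mul _))
  have hval (r : unitInterval) : ∫ x, u x ∂(ν.map (eval r))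
      = ∫ γ, u (γ 0) ∂ν - r * ∫ γ, dist (γ 0) (γ 1) ∂ν := by
    rw [integral_map (measurable_eval r).aemeasurable hmu.aestronglyMeasurable,
      ← integral_const_mul, ← integral_sub hu0 (hd.const_mul _)]
    exact integral_congr_ae (haff r)
  have hcost : ENNReal.ofReal (∫ γ, dist (γ 0) (γ 1) ∂ν) = ∫⁻ γ, edist (γ 0) (γ 1) ∂ν := by
    rw [ofReal_integral_eq_lintegral_ofReal hd (ae_of_all _ fun _ => dist_nonneg)]
    simp only [edist_dist]
  refine le_antisymm ((Wp_map_eval_le ν s t).trans_eq ?_) ?_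
  · rw [← lintegral_const_mul _ ((hev 0).edist (hev 1))]
    refine lintegral_congr_ae ?_
    filter_upwards [hgeo] with γ h
    rw [edist_dist, h s t, ENNReal.ofReal_mul (abs_nonneg _), ← edist_dist]
  · refine le_trans (le_of_eq ?_) (enorm_integral_sub_le_Wp hu (hint s) (hint t))
    rw [hval, hval, ← hcost, ← ENNReal.ofReal_mul (abs_nonneg _), Real.enorm_eq_ofReal_abs]
    congr 1
    have hnn : 0 ≤ ∫ γ : C(unitInterval, X), dist (γ 0) (γ 1) ∂ν :=
      integral_nonneg fun γ => dist_nonneg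
    rw [← abs_of_nonneg hnn, ← abs_mul, abs_of_nonneg hnn, ← abs_neg]
    congr 1
    ring

end Plan

/-- A dynamical plan concentrated on constant speed geodesics whose endpoint coupling is
concentrated on a `d`-cyclically monotone set induces a `W₁`-geodesic, and its endpoint
coupling is `W₁`-optimal. -/
theorem w1_geodesic_of_cyclicallyMonotone
    {X : Type*} [MetricSpace X] [CompleteSpace X] [SecondCountableTopology X]
    [MeasurableSpace X] [BorelSpace X]
    [MeasurableSpace C(unitInterval, X)] [BorelSpace C(unitInterval, X)]
    (ν : Measure C(unitInterval, X)) [IsProbabilityMeasure ν]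
    (hgeo : ν {γ | ¬ IsCSG γ} = 0)
    (hfin : (∫⁻ γ, edist (γ 0) (γ 1) ∂ν) ≠ ∞)
    (hmom : FiniteMoment 1 (ν.map (eval 0)))
    (hmono : ∃ Λ : Set (X × X), CyclicallyMonotone Λ ∧
      (ν.map (fun γ => (γ 0, γ 1))) Λᶜ = 0) :
    (Wp 1 (ν.map (eval 0)) (ν.map (eval 1)) = ∫⁻ γ, edist (γ 0) (γ 1) ∂ν) ∧
    (∀ s t : unitInterval,
      Wp 1 (ν.map (eval s)) (ν.map (eval t))
        = ENNReal.ofReal |(s : ℝ) - (t : ℝ)| * Wp 1 (ν.map (eval 0)) (ν.map (eval 1))) := by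
  obtain ⟨Λ, hΛ, hνΛ⟩ := hmono
  have hpair : Measurable (fun γ : C(unitInterval, X) => (γ 0, γ 1)) :=
    (measurable_eval 0).prodMk (measurable_eval 1)
  have hmem : ∀ᵐ γ ∂ν, (γ 0, γ 1) ∈ Λ :=
    ae_of_ae_map hpair.aemeasurable (p := fun z => z ∈ Λ) hνΛ
  obtain ⟨γ₀, hγ₀⟩ := hmem.exists
  obtain ⟨u, hu, hsub⟩ := exists_potential hΛ ⟨_, hγ₀⟩
  have key := Wp_map_eval_eq ν hgeo hfin hmom hu (hmem.mono fun γ h => hsub h)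
  have h01 : Wp 1 (ν.map (eval 0)) (ν.map (eval 1)) = ∫⁻ γ, edist (γ 0) (γ 1) ∂ν := by
    rw [key]; simp
  exact ⟨h01, fun s t => by rw [h01, key]⟩

end CDNote
end
end

section
/- Let (X,d) be a complete separable metric space, let μ0, μ1 ∈ P_1(X), and let u : X → ℝ be a Kantorovich potential for the W_1-transport problem between μ0 and μ1, i.e. u is 1-Lipschitz and ∫ u dμ0 − ∫ u dμ1 = W_1(μ0,μ1). Assume μ0(T_u^b) = μ1(T_u^b) = 1, and let f : T_u^b → Q ⊆ T_u^b be a Borel quotient map of the equivalence relation R_u^b (i.e. f(x) = f(y) if and only if (x,y) ∈ R_u^b, and (x,f(x)) ∈ R_u^b for all x ∈ T_u^b). Then f_♯μ0 = f_♯μ1. -/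
/-!
An optimal coupling `π` of `μ0` and `μ1` exists by Prokhorov's theorem (`exists_coupling_gamma`):
the set of couplings is compact for weak convergence, and the bounded continuous function
`min (d(x,y) - (u x - u y)) 1 ≥ 0` has arbitrarily small integral along couplings, because `u` is a
Kantorovich potential. A minimizer therefore gives this function integral zero, that is, `π` is
concentrated on `Γ_u`.

Since `μ0` and `μ1` are concentrated on `T_u^b`, `π` is also concentrated on `T_u^b × T_u^b`, hence
on `R_u^b`, so `f x = f y` for `π`-almost every `(x, y)`. Both pushforwards are then the image of
`π` under one and the same map up to a null set.

The transport set and the branching sets are projections of Borel sets, so `T_u^b` need not be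
Borel, and `μ0 (T_u^b) = 1` is a priori a statement about outer measure. It says that almost every
point lies in `T_u^b` because analytic sets are universally measurable
(`nullMeasurableSet_of_analyticSet`), which is proved here by approximation from inside with
compact sets.
-/

open MeasureTheory Set ENNReal

noncomputable section

namespace CDNote

/-! ### Universal measurability of analytic sets -/

/-- Any open set containing the image of the compact box `∏ [0, k i]` contains the image of one of
the closed cylinders `{x | ∀ i < n, x i ≤ k i}`, although these are not compact: truncating a point
of the `n`-th cylinder by `k` does not change its first `n` coordinates. -/
lemma exists_cylinder_image_subset {X : Type*} [TopologicalSpace X]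
    {g : (ℕ → ℕ) → X} (hg : Continuous g) (k : ℕ → ℕ) {U : Set X} (hU : IsOpen U)
    (hKU : g '' (Set.pi univ fun i => Iic (k i)) ⊆ U) :
    ∃ n, g '' {x | ∀ i < n, x i ≤ k i} ⊆ U := by
  by_contra! hcon
  have hx : ∀ n, ∃ x : ℕ → ℕ, (∀ i < n, x i ≤ k i) ∧ g x ∉ U := by
    intro n
    obtain ⟨_, ⟨x, hx, rfl⟩, hxU⟩ := Set.not_subset.1 (hcon n)
    exact ⟨x, hx, hxU⟩
  choose x hxk hxU using hx
  have hcomp : IsCompact (Set.pi univ fun i => Iic (k i)) :=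
    isCompact_univ_pi fun i => (Set.finite_Iic (k i)).isCompact
  obtain ⟨y, hyC, φ, hφ, hlim⟩ := hcomp.tendsto_subseq (x := fun n i => min (x n i) (k i))
    (fun n i _ => mem_Iic.2 (min_le_right _ _))
  have hlim' : Filter.Tendsto (fun n => x (φ n)) Filter.atTop (nhds y) := by
    rw [tendsto_pi_nhds] at hlim ⊢
    intro i
    refine (hlim i).congr' ?_
    filter_upwards [Filter.eventually_gt_atTop i] with n hn
    exact min_eq_left (hxk _ i (hn.trans_le (hφ.id_le n)))
  have hmem : y ∈ g ⁻¹' Uᶜ :=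
    (hU.isClosed_compl.preimage hg).mem_of_tendsto hlim' (Filter.Eventually.of_forall fun n => hxU _)
  exact hmem (hKU ⟨y, hyC, rfl⟩)

/-- Capacitability of analytic sets: the outer measure of an analytic set is approximated from
inside by compact sets. -/
lemma exists_isCompact_subset_of_analyticSet {X : Type*} [TopologicalSpace X]
    [MeasurableSpace X] (μ : Measure X) [μ.OuterRegular]
    {s : Set X} (hs : AnalyticSet s) {r : ℝ≥0∞} (hr : r < μ s) :
    ∃ K ⊆ s, IsCompact K ∧ r ≤ μ K := by
  rw [AnalyticSet] at hs
  rcases hs with rfl | ⟨g, hg, rfl⟩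
  · simp at hr
  have step : ∀ (n : ℕ) (A : Set (ℕ → ℕ)), ∃ k : ℕ,
      r < μ (g '' A) → r < μ (g '' (A ∩ {x | x n ≤ k})) := by
    intro n A
    by_cases hA : r < μ (g '' A)
    · have hun : g '' A = ⋃ k : ℕ, g '' (A ∩ {x | x n ≤ k}) := by
        rw [← image_iUnion, ← inter_iUnion]
        congr 1
        refine (inter_eq_left.2 fun x _ => ?_).symm
        exact mem_iUnion.2 ⟨x n, le_refl (x n)⟩
      have hmono : Monotone fun k : ℕ => g '' (A ∩ {x | x n ≤ k}) := by
        intro a b hab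
        exact image_mono (inter_subset_inter_right _ fun x (hx : x n ≤ a) => hx.trans hab)
      rw [hun, hmono.measure_iUnion] at hA
      obtain ⟨k, hk⟩ := lt_iSup_iff.1 hA
      exact ⟨k, fun _ => hk⟩
    · exact ⟨0, fun h => absurd h hA⟩
  choose kf hkf using step
  let A : ℕ → Set (ℕ → ℕ) := fun n => Nat.rec univ (fun n A => A ∩ {x | x n ≤ kf n A}) n
  have hAs : ∀ n, A (n + 1) = A n ∩ {x | x n ≤ kf n (A n)} := fun n => rfl
  have hAr : ∀ n, r < μ (g '' A n) := by
    intro n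
    induction n with
    | zero => simpa [A] using hr
    | succ n ih => rw [hAs]; exact hkf n _ ih
  have hAeq : ∀ n, A n = {x | ∀ i < n, x i ≤ kf i (A i)} := by
    intro n
    induction n with
    | zero => simp [A]
    | succ n ih =>
      rw [hAs]
      ext x
      have hxn : x ∈ A n ↔ ∀ i < n, x i ≤ kf i (A i) := by
        conv_lhs => rw [ih]
        rfl
      simp only [mem_inter_iff, hxn, mem_ofPred_eq, Nat.forall_lt_succ_right]
  refine ⟨g '' (Set.pi univ fun i => Iic (kf i (A i))), image_subset_range _ _,
    (isCompact_univ_pi fun i => (Set.finite_Iic _).isCompact).image hg, ?_⟩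
  rw [Set.measure_eq_iInf_isOpen]
  refine le_iInf₂ fun U hKU => le_iInf fun hU => ?_
  obtain ⟨n, hn⟩ := exists_cylinder_image_subset hg (fun i => kf i (A i)) hU hKU
  rw [← hAeq n] at hn
  exact (hAr n).le.trans (measure_mono hn)

lemma nullMeasurableSet_of_analyticSet {X : Type*} [TopologicalSpace X] [T2Space X]
    [MeasurableSpace X] [OpensMeasurableSpace X] (μ : Measure X) [IsFiniteMeasure μ]
    [μ.OuterRegular] {s : Set X} (hs : AnalyticSet s) : NullMeasurableSet s μ := by
  rcases eq_or_ne (μ s) 0 with h0 | h0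
  · exact NullMeasurableSet.of_null h0
  obtain ⟨r, -, hr, hlim⟩ := exists_seq_strictMono_tendsto' (pos_iff_ne_zero.2 h0)
  choose K hKs hKc hKr using fun n => exists_isCompact_subset_of_analyticSet μ hs (hr n).2
  have hmeas : MeasurableSet (⋃ n, K n) := MeasurableSet.iUnion fun n => (hKc n).measurableSet
  have hle : μ s ≤ μ (⋃ n, K n) :=
    le_of_tendsto' hlim fun n => (hKr n).trans (measure_mono (subset_iUnion K n))
  exact hmeas.nullMeasurableSet.congr (ae_eq_of_subset_of_measure_ge (iUnion_subset hKs) hle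
    hmeas.nullMeasurableSet (measure_ne_top _ _))

/-! ### The non-branched transport set is universally measurable -/

section Helpers
variable {X : Type*} [MetricSpace X]

lemma isClosed_gamma {u : X → ℝ} (hu : Continuous u) : IsClosed (Gamma u) :=
  isClosed_eq (by fun_prop) (by fun_prop)

lemma isClosed_ru {u : X → ℝ} (hu : Continuous u) : IsClosed (Ru u) :=
  (isClosed_gamma hu).union ((isClosed_gamma hu).preimage continuous_swap)

variable [SecondCountableTopology X] [MeasurableSpace X] [BorelSpace X]

lemma nullMeasurableSet_tub [CompleteSpace X] {u : X → ℝ} (hu : Continuous u)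
    (μ : Measure X) [IsFiniteMeasure μ] :
    NullMeasurableSet (Tub u) μ := by
  have hG := (isClosed_gamma hu).measurableSet
  have hR := (isClosed_ru hu).measurableSet
  have hT : AnalyticSet (Tu u) := by
    have h : MeasurableSet (Ru u ∩ {p : X × X | p.2 ≠ p.1}) :=
      hR.inter (isClosed_eq continuous_snd continuous_fst).measurableSet.compl
    convert h.analyticSet.image_of_continuous continuous_fst using 1
    ext x
    simp [Tu]
  have hP : AnalyticSet {x : X | ∃ z w, (x, z) ∈ Gamma u ∧ (x, w) ∈ Gamma u ∧ (z, w) ∉ Ru u} := by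
    have h : MeasurableSet {p : X × X × X |
        (p.1, p.2.1) ∈ Gamma u ∧ (p.1, p.2.2) ∈ Gamma u ∧ (p.2.1, p.2.2) ∉ Ru u} :=
      (hG.preimage (by fun_prop)).inter ((hG.preimage (by fun_prop)).inter
        (hR.compl.preimage (by fun_prop)))
    convert h.analyticSet.image_of_continuous continuous_fst using 1
    ext x
    simp
  have hM : AnalyticSet {x : X | ∃ z w, (z, x) ∈ Gamma u ∧ (w, x) ∈ Gamma u ∧ (z, w) ∉ Ru u} := by
    have h : MeasurableSet {p : X × X × X |
        (p.2.1, p.1) ∈ Gamma u ∧ (p.2.2, p.1) ∈ Gamma u ∧ (p.2.1, p.2.2) ∉ Ru u} :=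
      (hG.preimage (by fun_prop)).inter ((hG.preimage (by fun_prop)).inter
        (hR.compl.preimage (by fun_prop)))
    convert h.analyticSet.image_of_continuous continuous_fst using 1
    ext x
    simp
  have hT' := nullMeasurableSet_of_analyticSet μ hT
  exact hT'.diff ((hT'.inter (nullMeasurableSet_of_analyticSet μ hP)).union
    (hT'.inter (nullMeasurableSet_of_analyticSet μ hM)))

lemma ae_mem_tub [CompleteSpace X] {u : X → ℝ} (hu : Continuous u)
    (μ : Measure X) [IsProbabilityMeasure μ]
    (h : μ (Tub u) = 1) : ∀ᵐ x ∂μ, x ∈ Tub u :=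
  (prob_compl_eq_zero_iff₀ (nullMeasurableSet_tub hu μ)).2 h

/-! ### Existence of an optimal coupling -/

lemma integrable_of_finiteMoment {u : X → ℝ} (hu : LipschitzWith 1 u) (μ : Measure X)
    [IsProbabilityMeasure μ] (hm : FiniteMoment 1 μ) : Integrable u μ := by
  obtain ⟨x₀, hx₀⟩ := hm
  have hd : Integrable (fun x => dist x x₀) μ := by
    refine ⟨by fun_prop, ?_⟩
    simp only [ENNReal.rpow_one] at hx₀
    simpa [hasFiniteIntegral_iff_norm, ← edist_dist, abs_of_nonneg dist_nonneg] using hx₀.lt_top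
  refine (hd.add (integrable_const |u x₀|)).mono' hu.continuous.aestronglyMeasurable
    (Filter.Eventually.of_forall fun x => ?_)
  have h1 := hu.dist_le_mul x x₀
  rw [Real.dist_eq] at h1
  have h2 := abs_add_le (u x - u x₀) (u x₀)
  simp only [NNReal.coe_one, one_mul, sub_add_cancel] at h1 h2
  simpa using h2.trans (by linarith)

/-- Weak compactness of the set of couplings. -/
lemma isCompact_couplings [CompleteSpace X] (μ0 μ1 : ProbabilityMeasure X) :
    IsCompact {π : ProbabilityMeasure (X × X) |
      IsCoupling (π : Measure (X × X)) (μ0 : Measure X) (μ1 : Measure X)} := by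
  have hclosed : IsClosed {π : ProbabilityMeasure (X × X) |
      IsCoupling (π : Measure (X × X)) (μ0 : Measure X) (μ1 : Measure X)} := by
    have heq : {π : ProbabilityMeasure (X × X) |
        IsCoupling (π : Measure (X × X)) (μ0 : Measure X) (μ1 : Measure X)} =
        {π | π.map measurable_fst.aemeasurable = μ0} ∩
          {π | π.map measurable_snd.aemeasurable = μ1} := by
      ext π
      simp only [IsCoupling, mem_inter_iff, mem_ofPred_eq]
      constructor
      · exact fun h => ⟨Subtype.ext h.1, Subtype.ext h.2⟩
      · exact fun h => ⟨congrArg Subtype.val h.1, congrArg Subtype.val h.2⟩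
    rw [heq]
    exact (isClosed_singleton.preimage (ProbabilityMeasure.continuous_map continuous_fst)).inter
      (isClosed_singleton.preimage (ProbabilityMeasure.continuous_map continuous_snd))
  rw [← hclosed.closure_eq]
  apply isCompact_closure_of_isTightMeasureSet
  rw [isTightMeasureSet_iff_exists_isCompact_measure_compl_le]
  intro ε hε
  obtain ⟨K0, hK0, h0⟩ := isTightMeasureSet_iff_exists_isCompact_measure_compl_le.1
    (isTightMeasureSet_singleton (μ := (μ0 : Measure X))) (ε / 2) (ENNReal.half_pos hε.ne')
  obtain ⟨K1, hK1, h1⟩ := isTightMeasureSet_iff_exists_isCompact_measure_compl_le.1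
    (isTightMeasureSet_singleton (μ := (μ1 : Measure X))) (ε / 2) (ENNReal.half_pos hε.ne')
  refine ⟨K0 ×ˢ K1, hK0.prod hK1, ?_⟩
  rintro _ ⟨π, ⟨hπ0, hπ1⟩, rfl⟩
  have h0' := h0 _ rfl
  have h1' := h1 _ rfl
  rw [← hπ0, Measure.map_apply measurable_fst hK0.measurableSet.compl] at h0'
  rw [← hπ1, Measure.map_apply measurable_snd hK1.measurableSet.compl] at h1'
  have hsub : (K0 ×ˢ K1)ᶜ ⊆ Prod.fst ⁻¹' K0ᶜ ∪ Prod.snd ⁻¹' K1ᶜ := by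
    rintro ⟨a, b⟩ hab
    simp only [mem_compl_iff, mem_prod, not_and_or] at hab
    exact hab
  calc (π : Measure (X × X)) (K0 ×ˢ K1)ᶜ
      ≤ (π : Measure (X × X)) (Prod.fst ⁻¹' K0ᶜ) + (π : Measure (X × X)) (Prod.snd ⁻¹' K1ᶜ) :=
        (measure_mono hsub).trans (measure_union_le _ _)
    _ ≤ ε / 2 + ε / 2 := add_le_add h0' h1'
    _ = ε := ENNReal.add_halves ε

/-- Along couplings, the integral of the defect `d(x,y) - (u x - u y)` is the excess of the cost
over `W₁`, so it can be made arbitrarily small. -/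
lemma exists_coupling_integral_lt (μ0 μ1 : Measure X) [IsProbabilityMeasure μ0]
    [IsProbabilityMeasure μ1] (hm0 : FiniteMoment 1 μ0) (hm1 : FiniteMoment 1 μ1)
    (u : X → ℝ) (hu : LipschitzWith 1 u) (hWfin : Wp 1 μ0 μ1 ≠ ∞)
    (hkant : (∫ x, u x ∂μ0) - (∫ x, u x ∂μ1) = (Wp 1 μ0 μ1).toReal) {ε : ℝ} (hε : 0 < ε) :
    ∃ π : Measure (X × X), IsCoupling π μ0 μ1 ∧
      Integrable (fun p : X × X => dist p.1 p.2 - (u p.1 - u p.2)) π ∧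
      ∫ p : X × X, (dist p.1 p.2 - (u p.1 - u p.2)) ∂π < ε := by
  have hlt : Wp 1 μ0 μ1 < Wp 1 μ0 μ1 + ENNReal.ofReal ε :=
    ENNReal.lt_add_right hWfin (by simpa using hε)
  obtain ⟨π, hπ, hlt'⟩ : ∃ π : Measure (X × X), ∃ _ : IsCoupling π μ0 μ1,
      ∫⁻ z, edist z.1 z.2 ∂π < Wp 1 μ0 μ1 + ENNReal.ofReal ε := by
    have h := hlt
    conv_lhs at h => rw [Wp, Wcost]
    simpa only [div_one, ENNReal.rpow_one, iInf_lt_iff] using h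
  have hfin : ∫⁻ z, edist z.1 z.2 ∂π ≠ ∞ := (hlt'.trans_le le_top).ne
  have hd : Integrable (fun p : X × X => dist p.1 p.2) π := by
    refine ⟨by fun_prop, ?_⟩
    simpa [hasFiniteIntegral_iff_norm, ← edist_dist, abs_of_nonneg dist_nonneg] using hfin.lt_top
  have hu0 := integrable_of_finiteMoment hu μ0 hm0
  have hu1 := integrable_of_finiteMoment hu μ1 hm1
  have hcu := hu.continuous
  rw [← hπ.1] at hu0
  rw [← hπ.2] at hu1
  have hI0 : ∫ p : X × X, u p.1 ∂π = ∫ x, u x ∂μ0 := by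
    rw [← hπ.1, integral_map measurable_fst.aemeasurable hcu.aestronglyMeasurable]
  have hI1 : ∫ p : X × X, u p.2 ∂π = ∫ x, u x ∂μ1 := by
    rw [← hπ.2, integral_map measurable_snd.aemeasurable hcu.aestronglyMeasurable]
  have hu0' : Integrable (fun p : X × X => u p.1) π := hu0.comp_measurable measurable_fst
  have hu1' : Integrable (fun p : X × X => u p.2) π := hu1.comp_measurable measurable_snd
  refine ⟨π, hπ, hd.sub (hu0'.sub hu1'), ?_⟩
  have hdI : ∫ p : X × X, dist p.1 p.2 ∂π = (∫⁻ z, edist z.1 z.2 ∂π).toReal := by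
    rw [integral_eq_lintegral_of_nonneg_ae (Filter.Eventually.of_forall fun p => dist_nonneg)
      (by fun_prop)]
    simp only [edist_dist]
  have hlt2 := (ENNReal.toReal_lt_toReal hfin
    (ENNReal.add_ne_top.2 ⟨hWfin, ENNReal.ofReal_ne_top⟩)).2 hlt'
  rw [ENNReal.toReal_add hWfin ENNReal.ofReal_ne_top, ENNReal.toReal_ofReal hε.le] at hlt2
  have hsub1 := integral_sub hd (hu0'.sub hu1')
  have hsub2 := integral_sub hu0' hu1'
  simp only [Pi.sub_apply] at hsub1
  rw [hsub1, hsub2, hI0, hI1, hdI, hkant]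
  linarith

/-- There is a coupling concentrated on `Γ_u`; by the choice of `u`, it is optimal. -/
lemma exists_coupling_gamma [CompleteSpace X] (μ0 μ1 : Measure X) [IsProbabilityMeasure μ0]
    [IsProbabilityMeasure μ1] (hm0 : FiniteMoment 1 μ0) (hm1 : FiniteMoment 1 μ1)
    (u : X → ℝ) (hu : LipschitzWith 1 u) (hWfin : Wp 1 μ0 μ1 ≠ ∞)
    (hkant : (∫ x, u x ∂μ0) - (∫ x, u x ∂μ1) = (Wp 1 μ0 μ1).toReal) :
    ∃ π : Measure (X × X), IsCoupling π μ0 μ1 ∧ ∀ᵐ p ∂π, p ∈ Gamma u := by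
  have hcu := hu.continuous
  have hc0 : ∀ p : X × X, 0 ≤ dist p.1 p.2 - (u p.1 - u p.2) := by
    intro p
    have h := hu.dist_le_mul p.1 p.2
    rw [Real.dist_eq, NNReal.coe_one, one_mul] at h
    linarith [le_abs_self (u p.1 - u p.2)]
  -- The defect is truncated at `1` to be an admissible test function for weak convergence.
  let c : BoundedContinuousFunction (X × X) ℝ := BoundedContinuousFunction.ofNormedAddCommGroup
    (fun p => min (dist p.1 p.2 - (u p.1 - u p.2)) 1) (by fun_prop) 1 (fun p => by
      rw [Real.norm_eq_abs, abs_of_nonneg (le_min (hc0 p) zero_le_one)]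
      exact min_le_right _ _)
  have hc : ∀ p, c p = min (dist p.1 p.2 - (u p.1 - u p.2)) 1 := fun p => rfl
  have hcnn : ∀ p, 0 ≤ c p := fun p => le_min (hc0 p) zero_le_one
  let P0 : ProbabilityMeasure X := ⟨μ0, inferInstance⟩
  let P1 : ProbabilityMeasure X := ⟨μ1, inferInstance⟩
  have hprob : ∀ π : Measure (X × X), IsCoupling π μ0 μ1 → IsProbabilityMeasure π := by
    intro π hπ
    refine ⟨?_⟩
    have h : μ0 univ = 1 := measure_univ
    rwa [← hπ.1, Measure.map_apply measurable_fst MeasurableSet.univ, preimage_univ] at h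
  have hsmall : ∀ ε : ℝ, 0 < ε → ∃ π : ProbabilityMeasure (X × X),
      IsCoupling (π : Measure (X × X)) μ0 μ1 ∧ ∫ p, c p ∂(π : Measure (X × X)) < ε := by
    intro ε hε
    obtain ⟨π, hπ, hint, hlt⟩ :=
      exists_coupling_integral_lt μ0 μ1 hm0 hm1 u hu hWfin hkant hε
    have := hprob π hπ
    exact ⟨⟨π, inferInstance⟩, hπ, lt_of_le_of_lt
      (integral_mono (c.integrable π) hint fun p => min_le_left _ _) hlt⟩
  obtain ⟨π₁, hπ₁, -⟩ := hsmall 1 one_pos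
  obtain ⟨π, hπ, hmin⟩ := (isCompact_couplings P0 P1).exists_isMinOn ⟨π₁, hπ₁⟩
    (ProbabilityMeasure.continuous_integral_boundedContinuousFunction c).continuousOn
  refine ⟨π, hπ, ?_⟩
  have hzero : ∫ p, c p ∂(π : Measure (X × X)) = 0 := by
    refine le_antisymm (le_of_forall_pos_lt_add fun ε hε => ?_) (integral_nonneg hcnn)
    obtain ⟨π', hπ', hlt⟩ := hsmall ε hε
    rw [zero_add]
    exact (isMinOn_iff.1 hmin π' hπ').trans_lt hlt
  have hae := (integral_eq_zero_iff_of_nonneg hcnn (c.integrable _)).1 hzero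
  filter_upwards [hae] with p hp
  change min (dist p.1 p.2 - (u p.1 - u p.2)) 1 = 0 at hp
  change u p.1 - u p.2 = dist p.1 p.2
  rcases min_choice (dist p.1 p.2 - (u p.1 - u p.2)) 1 with h | h <;> linarith

end Helpers

/-- If `u` is a Kantorovich potential for the `W₁`-transport problem between `μ₀` and `μ₁`,
both concentrated on the non-branched transport set, then the pushforwards of `μ₀` and `μ₁`
under a quotient map of `R_u^b` coincide. -/
theorem quotient_pushforward_eq
    {X : Type*} [MetricSpace X] [CompleteSpace X] [SecondCountableTopology X]
    [MeasurableSpace X] [BorelSpace X]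
    (μ0 μ1 : Measure X) [IsProbabilityMeasure μ0] [IsProbabilityMeasure μ1]
    (hm0 : FiniteMoment 1 μ0) (hm1 : FiniteMoment 1 μ1)
    (u : X → ℝ) (hu : LipschitzWith 1 u)
    (hWfin : Wp 1 μ0 μ1 ≠ ∞)
    (hkant : (∫ x, u x ∂μ0) - (∫ x, u x ∂μ1) = (Wp 1 μ0 μ1).toReal)
    (h0 : μ0 (Tub u) = 1) (h1 : μ1 (Tub u) = 1)
    (f : X → X) (hf : Measurable f)
    (hfQ : ∀ x ∈ Tub u, f x ∈ Tub u)
    (hfquot : ∀ x ∈ Tub u, ∀ y ∈ Tub u, (f x = f y ↔ (x, y) ∈ Rub u))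
    (hfrel : ∀ x ∈ Tub u, (x, f x) ∈ Rub u) :
    μ0.map f = μ1.map f := by
  obtain ⟨π, hπ, hΓ⟩ := exists_coupling_gamma μ0 μ1 hm0 hm1 u hu hWfin hkant
  have ht0 := ae_mem_tub hu.continuous μ0 h0
  have ht1 := ae_mem_tub hu.continuous μ1 h1
  rw [← hπ.1] at ht0
  rw [← hπ.2] at ht1
  have hae : (fun p : X × X => f p.1) =ᵐ[π] fun p => f p.2 := by
    filter_upwards [hΓ, ae_of_ae_map measurable_fst.aemeasurable ht0,
      ae_of_ae_map measurable_snd.aemeasurable ht1] with p hp hp1 hp2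
    exact (hfquot _ hp1 _ hp2).2 ⟨Or.inl hp, hp1, hp2⟩
  calc μ0.map f = π.map (fun p => f p.1) := by
        rw [← hπ.1, Measure.map_map hf measurable_fst]; rfl
    _ = π.map (fun p => f p.2) := Measure.map_congr hae
    _ = μ1.map f := by
        rw [← hπ.2, Measure.map_map hf measurable_snd]; rfl

end CDNote
end
end
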